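/- Dependence of the S-shaped function on the steepness parameter β (conservativeness of the scores): for all real β₁, β₂ with 0 < β₁ < β₂, (i) if 0 < ξ < 1/2 then f_{β₂}(ξ) < f_{β₁}(ξ), and (ii) if 1/2 < ξ < 1 then f_{β₁}(ξ) < f_{β₂}(ξ); that is, decreasing β pulls the score towards 1/2, downweighting scores less sharply as the argument moves away from 1. -/

import Mathlib

/-- The S-shaped scoring function: `0` for `ξ ≤ 0`, `ξ^β/(ξ^β + (1-ξ)^β)` for
`0 < ξ < 1`, and `1` for `ξ ≥ 1`; real powers are `Real.rpow`. -/
noncomputable def sShape (β : ℝ) (ξ : ℝ) : ℝ :=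
  if ξ ≤ 0 then 0 else if ξ < 1 then ξ ^ β / (ξ ^ β + (1 - ξ) ^ β) else 1

theorem sShape_aux (a b s t : ℝ) (ha : 0 < a) (hab : a < b) (hst : s < t) :
    a ^ t * b ^ s < a ^ s * b ^ t := by
  have hb : 0 < b := ha.trans hab
  have h1 : a ^ t = a ^ s * a ^ (t - s) := by
    rw [← Real.rpow_add ha]; congr 1; ring
  have h2 : b ^ t = b ^ s * b ^ (t - s) := by
    rw [← Real.rpow_add hb]; congr 1; ring
  have h3 : a ^ (t - s) < b ^ (t - s) := Real.rpow_lt_rpow ha.le hab (by linarith)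
  have h4 : 0 < a ^ s * b ^ s := mul_pos (Real.rpow_pos_of_pos ha _) (Real.rpow_pos_of_pos hb _)
  have h5 := mul_lt_mul_of_pos_left h3 h4
  rw [h1, h2]
  linarith

/-- Dependence of the S-shaped function on the steepness parameter `β`: for
`0 < β₁ < β₂`, (i) if `0 < ξ < 1/2` then `sShape β₂ ξ < sShape β₁ ξ`, and
(ii) if `1/2 < ξ < 1` then `sShape β₁ ξ < sShape β₂ ξ`. -/
theorem sShape_beta_dependence (β₁ β₂ : ℝ) (hβ₁ : 0 < β₁) (hβ : β₁ < β₂) (ξ : ℝ) :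
    (0 < ξ → ξ < 1 / 2 → sShape β₂ ξ < sShape β₁ ξ) ∧
    (1 / 2 < ξ → ξ < 1 → sShape β₁ ξ < sShape β₂ ξ) := by
  have key : 0 < ξ → ξ < 1 → ∀ β, sShape β ξ = ξ ^ β / (ξ ^ β + (1 - ξ) ^ β) := by
    intro h0 h1 β
    rw [sShape, if_neg (not_le.mpr h0), if_pos h1]
  constructor
  · intro h0 h1
    have hb : 0 < 1 - ξ := by linarith
    rw [key h0 (by linarith), key h0 (by linarith)]
    have h := sShape_aux ξ (1 - ξ) β₁ β₂ h0 (by linarith) hβ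
    rw [div_lt_div_iff₀ (by positivity) (by positivity)]
    linarith
  · intro h1 h2
    have h0 : 0 < ξ := by linarith
    have hb : 0 < 1 - ξ := by linarith
    rw [key h0 h2, key h0 h2]
    have h := sShape_aux (1 - ξ) ξ β₁ β₂ hb (by linarith) hβ
    rw [div_lt_div_iff₀ (by positivity) (by positivity)]
    linarith
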